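/- (Andrews's identity.) Let q ∈ ℂ with 0 < |q| < 1, let n ≥ 1 be an integer, and let a, c, b_1, …, b_n, x_1, …, x_n ∈ ℂ with a ≠ 0, |a| < 1, |x_j| < 1 for all j, and such that c ≠ q^{−m} and b_j x_j ≠ q^{−m} for all integers m ≥ 0 and all j. Then ∑_{(k_1,…,k_n) ∈ ℕ^n} ((a;q)_{k_1+⋯+k_n} / (c;q)_{k_1+⋯+k_n}) · ∏_{j=1}^n (b_j;q)_{k_j} / (q;q)_{k_j} · x_j^{k_j} converges absolutely and equals [(a;q)_∞ ∏_{j=1}^n (b_j x_j;q)_∞] / [(c;q)_∞ ∏_{j=1}^n (x_j;q)_∞] · _{n+1}φ_n[c/a, x_1, …, x_n; b_1 x_1, …, b_n x_n; q, a]. -/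

import Mathlib

open Finset

/-- The `q`-shifted factorial `(a;q)_n` for an arbitrary integer `n`. -/
noncomputable def qpoch (q a : ℂ) (n : ℤ) : ℂ :=
  if 0 ≤ n then ∏ i ∈ Finset.range n.toNat, (1 - a * q ^ (i : ℤ))
  else (∏ i ∈ Finset.range (-n).toNat, (1 - a * q ^ (n + (i : ℤ))))⁻¹

/-- The infinite `q`-shifted factorial `(a;q)_∞`. -/
noncomputable def qinf (q a : ℂ) : ℂ := ∏' i : ℕ, (1 - a * q ^ i)

/-- General term of the multiple series in Andrews's identity. -/
noncomputable def andrewsTerm (q a c : ℂ) {n : ℕ} (b x : Fin n → ℂ) :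
    (Fin n → ℕ) → ℂ := fun k =>
  qpoch q a ((∑ j, k j : ℕ) : ℤ) / qpoch q c ((∑ j, k j : ℕ) : ℤ) *
    ∏ j, qpoch q (b j) ((k j : ℕ) : ℤ) / qpoch q q ((k j : ℕ) : ℤ) * x j ^ (k j)

/-!
By the `q`-binomial theorem, `(a;q)_N / (c;q)_N` is `(a;q)_∞ / (c;q)_∞` times the sum over `ℓ` of
`(c/a;q)_ℓ / (q;q)_ℓ * (a q^N)^ℓ`. For `N = ∑ j, k j`, the factor `q^(N ℓ)` only rescales each `x j`
to `x j * q^ℓ`, so after interchanging the two sums the sum over `k` splits into `n` independent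
`q`-binomial series.
-/

open Filter Topology

theorem summable_norm_mul_of_norm_le {R ι : Type*} [NormedRing R] {u f : ι → R} {C : ℝ}
    (hu : ∀ i, ‖u i‖ ≤ C) (hf : Summable fun i ↦ ‖f i‖) : Summable fun i ↦ ‖u i * f i‖ :=
  (hf.mul_left C).of_nonneg_of_le (fun _ ↦ norm_nonneg _) fun i ↦
    (norm_mul_le _ _).trans (mul_le_mul_of_nonneg_right (hu i) (norm_nonneg _))

section ProdSeries

variable {R : Type*} [NormedCommRing R]

theorem summable_norm_prod_apply {n : ℕ} {β : Fin n → Type*} {f : ∀ j, β j → R}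
    (hf : ∀ j, Summable fun i ↦ ‖f j i‖) : Summable fun k : ∀ j, β j ↦ ‖∏ j, f j (k j)‖ := by
  induction n with
  | zero => exact (hasSum_fintype _).summable
  | succ n ih =>
    rw [← (Fin.consEquiv β).summable_iff]
    refine ((hf 0).mul_norm (ih fun j ↦ hf j.succ)).congr fun p ↦ ?_
    simp [Fin.consEquiv, Fin.prod_univ_succ]

theorem tsum_prod_apply [CompleteSpace R] {n : ℕ} {β : Fin n → Type*} {f : ∀ j, β j → R}
    (hf : ∀ j, Summable fun i ↦ ‖f j i‖) :
    ∑' k : ∀ j, β j, ∏ j, f j (k j) = ∏ j, ∑' i, f j i := by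
  induction n with
  | zero => simp [tsum_fintype]
  | succ n ih =>
    have htail : ∀ j : Fin n, Summable fun i ↦ ‖f j.succ i‖ := fun j ↦ hf j.succ
    rw [← (Fin.consEquiv β).tsum_eq, Fin.prod_univ_succ, ← ih htail,
      tsum_mul_tsum_of_summable_norm (hf 0) (summable_norm_prod_apply htail)]
    exact tsum_congr fun p ↦ by simp [Fin.consEquiv, Fin.prod_univ_succ]

end ProdSeries

section ShiftedFactorial

variable {q : ℂ}

theorem norm_mul_pow_lt_one (hq : ‖q‖ < 1) {z : ℂ} (hz : ‖z‖ < 1) (n : ℕ) : ‖z * q ^ n‖ < 1 := by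
  rw [norm_mul, norm_pow]
  exact mul_lt_one_of_nonneg_of_lt_one_left (norm_nonneg _) hz (pow_le_one₀ (norm_nonneg _) hq.le)

theorem qpoch_natCast (q a : ℂ) (n : ℕ) : qpoch q a n = ∏ i ∈ range n, (1 - a * q ^ i) := by
  simp [qpoch]

theorem qpoch_natCast_succ (q a : ℂ) (n : ℕ) :
    qpoch q a (n + 1 : ℕ) = qpoch q a n * (1 - a * q ^ n) := by
  simp only [qpoch_natCast, prod_range_succ]

theorem summable_norm_neg_mul_pow (hq : ‖q‖ < 1) (a : ℂ) : Summable fun i : ℕ ↦ ‖-(a * q ^ i)‖ := by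
  simpa only [norm_neg, norm_mul, norm_pow] using
    (summable_geometric_of_lt_one (norm_nonneg q) hq).mul_left ‖a‖

theorem multipliable_one_sub_mul_pow (hq : ‖q‖ < 1) (a : ℂ) :
    Multipliable fun i : ℕ ↦ 1 - a * q ^ i := by
  simpa only [sub_eq_add_neg] using
    multipliable_one_add_of_summable (summable_norm_neg_mul_pow hq a)

theorem tendsto_qpoch_qinf (hq : ‖q‖ < 1) (a : ℂ) :
    Tendsto (fun n : ℕ ↦ qpoch q a n) atTop (𝓝 (qinf q a)) := by
  simpa only [qpoch_natCast, qinf] using (multipliable_one_sub_mul_pow hq a).tendsto_prod_tprod_nat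

theorem qinf_eq_qpoch_mul_qinf (hq : ‖q‖ < 1) (a : ℂ) (n : ℕ) :
    qinf q a = qpoch q a n * qinf q (a * q ^ n) := by
  have hshift : ∀ i, 1 - a * q ^ n * q ^ i = 1 - a * q ^ (i + n) := fun i ↦ by ring
  have htail := multipliable_one_sub_mul_pow hq (a * q ^ n)
  simp only [hshift] at htail
  simp only [qinf, qpoch_natCast, hshift]
  exact (htail.prod_mul_tprod_nat_mul' (f := fun i ↦ 1 - a * q ^ i)).symm

theorem qinf_ne_zero (hq : ‖q‖ < 1) {a : ℂ} (ha : ∀ i : ℕ, a * q ^ i ≠ 1) : qinf q a ≠ 0 := by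
  simpa only [qinf, sub_eq_add_neg] using tprod_one_add_ne_zero_of_summable
    (fun i ↦ by simpa only [← sub_eq_add_neg] using sub_ne_zero.mpr (ha i).symm)
    (summable_norm_neg_mul_pow hq a)

theorem qinf_ne_zero_of_norm_lt_one (hq : ‖q‖ < 1) {a : ℂ} (ha : ‖a‖ < 1) : qinf q a ≠ 0 :=
  qinf_ne_zero hq fun i h ↦ by simpa [h] using norm_mul_pow_lt_one hq ha i

theorem qinf_ne_zero_of_ne_zpow (hq : ‖q‖ < 1) {a : ℂ}
    (ha : ∀ m : ℕ, a ≠ q ^ (-(m : ℤ))) : qinf q a ≠ 0 :=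
  qinf_ne_zero hq fun i h ↦ ha i <| by
    rw [zpow_neg, zpow_natCast]
    exact eq_inv_of_mul_eq_one_left h

theorem qpoch_ne_zero_of_qinf_ne_zero (hq : ‖q‖ < 1) {a : ℂ} (ha : qinf q a ≠ 0) (n : ℕ) :
    qpoch q a n ≠ 0 :=
  left_ne_zero_of_mul (qinf_eq_qpoch_mul_qinf hq a n ▸ ha)

theorem qinf_mul_pow_div_qinf_mul_pow (hq : ‖q‖ < 1) {a c : ℂ} (ha : qinf q a ≠ 0)
    (hc : qinf q c ≠ 0) (n : ℕ) :
    qinf q (c * q ^ n) / qinf q (a * q ^ n) =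
      qinf q c / qinf q a * (qpoch q a n / qpoch q c n) := by
  have ha' := qpoch_ne_zero_of_qinf_ne_zero hq ha n
  have hc' := qpoch_ne_zero_of_qinf_ne_zero hq hc n
  rw [qinf_eq_qpoch_mul_qinf hq a n, qinf_eq_qpoch_mul_qinf hq c n]
  field_simp

theorem exists_norm_qpoch_div_qpoch_le (hq : ‖q‖ < 1) (a : ℂ) {c : ℂ} (hc : qinf q c ≠ 0) :
    ∃ C : ℝ, ∀ n : ℕ, ‖qpoch q a n / qpoch q c n‖ ≤ C := by
  have hlim := (tendsto_qpoch_qinf hq a).div (tendsto_qpoch_qinf hq c) hc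
  obtain ⟨C, hC⟩ := (Metric.isBounded_range_of_tendsto _ hlim).exists_norm_le
  exact ⟨C, fun n ↦ hC _ ⟨n, rfl⟩⟩

end ShiftedFactorial

section QBinomial

variable {q : ℂ}

/-- The term of index `k` of the `q`-binomial series `₁φ₀[a; –; q, z]`. -/
noncomputable def qBinomialTerm (q a z : ℂ) (k : ℕ) : ℂ :=
  qpoch q a k / qpoch q q k * z ^ k

theorem qBinomialTerm_mul (q a z w : ℂ) (k : ℕ) :
    qBinomialTerm q a (z * w) k = w ^ k * qBinomialTerm q a z k := by
  rw [qBinomialTerm, qBinomialTerm, mul_pow]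
  ring

theorem qBinomialTerm_zero (q a z : ℂ) : qBinomialTerm q a z 0 = 1 := by
  simp only [qBinomialTerm, qpoch_natCast, range_zero, prod_empty, pow_zero, div_one, mul_one]

theorem one_sub_pow_mul_qBinomialTerm_succ (hq : ‖q‖ < 1) (a z : ℂ) (k : ℕ) :
    (1 - q ^ (k + 1)) * qBinomialTerm q a z (k + 1) =
      z * ((1 - a * q ^ k) * qBinomialTerm q a z k) := by
  have hk : qpoch q q (k + 1 : ℕ) ≠ 0 :=
    qpoch_ne_zero_of_qinf_ne_zero hq (qinf_ne_zero_of_norm_lt_one hq hq) _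
  simp only [qBinomialTerm]
  rw [qpoch_natCast_succ] at hk ⊢
  rw [qpoch_natCast_succ]
  rw [← pow_succ'] at hk ⊢
  obtain ⟨hk₁, hk₂⟩ := mul_ne_zero_iff.mp hk
  field_simp
  ring

theorem summable_norm_qBinomialTerm (hq : ‖q‖ < 1) (a : ℂ) {z : ℂ} (hz : ‖z‖ < 1) :
    Summable fun k ↦ ‖qBinomialTerm q a z k‖ := by
  obtain ⟨C, hC⟩ := exists_norm_qpoch_div_qpoch_le hq a (qinf_ne_zero_of_norm_lt_one hq hq)
  exact summable_norm_mul_of_norm_le hC (summable_norm_geometric_of_norm_lt_one hz)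

theorem one_sub_mul_tsum_qBinomialTerm (hq : ‖q‖ < 1) (a : ℂ) {z : ℂ} (hz : ‖z‖ < 1) :
    (1 - z) * ∑' k, qBinomialTerm q a z k =
      (1 - a * z) * ∑' k, qBinomialTerm q a (z * q) k := by
  have hs := (summable_norm_qBinomialTerm hq a hz).of_norm
  have hsq : Summable (qBinomialTerm q a (z * q)) :=
    (summable_norm_qBinomialTerm hq a (by simpa using norm_mul_pow_lt_one hq hz 1)).of_norm
  have hdiff : ∑' k, qBinomialTerm q a z k - ∑' k, qBinomialTerm q a (z * q) k =
      z * (∑' k, qBinomialTerm q a z k - a * ∑' k, qBinomialTerm q a (z * q) k) :=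
    calc
      _ = ∑' k, (qBinomialTerm q a z k - qBinomialTerm q a (z * q) k) := (hs.tsum_sub hsq).symm
      _ = ∑' k, (qBinomialTerm q a z (k + 1) - qBinomialTerm q a (z * q) (k + 1)) := by
        rw [(hs.sub hsq).tsum_eq_zero_add, qBinomialTerm_zero, qBinomialTerm_zero, sub_self,
          zero_add]
      _ = ∑' k, z * (qBinomialTerm q a z k - a * qBinomialTerm q a (z * q) k) :=
        tsum_congr fun k ↦ by
          rw [qBinomialTerm_mul, qBinomialTerm_mul]
          linear_combination one_sub_pow_mul_qBinomialTerm_succ hq a z k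
      _ = _ := by rw [tsum_mul_left, hs.tsum_sub (hsq.mul_left a), tsum_mul_left]
  linear_combination hdiff

theorem qpoch_mul_tsum_qBinomialTerm (hq : ‖q‖ < 1) (a : ℂ) {z : ℂ} (hz : ‖z‖ < 1) (n : ℕ) :
    qpoch q z n * ∑' k, qBinomialTerm q a z k =
      qpoch q (a * z) n * ∑' k, qBinomialTerm q a (z * q ^ n) k := by
  induction n with
  | zero => simp only [qpoch_natCast, range_zero, prod_empty, pow_zero, mul_one]
  | succ n ih =>
    have hstep := one_sub_mul_tsum_qBinomialTerm hq a (norm_mul_pow_lt_one hq hz n)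
    rw [qpoch_natCast_succ, qpoch_natCast_succ, pow_succ, ← mul_assoc z]
    linear_combination (1 - z * q ^ n) * ih + qpoch q (a * z) n * hstep

theorem tendsto_tsum_qBinomialTerm_mul_pow (hq : ‖q‖ < 1) (a : ℂ) {z : ℂ} (hz : ‖z‖ < 1) :
    Tendsto (fun n : ℕ ↦ ∑' k, qBinomialTerm q a (z * q ^ n) k) atTop (𝓝 1) := by
  have hval : ∑' k, qBinomialTerm q a 0 k = 1 := by
    rw [tsum_eq_single 0 fun k hk ↦ by simp [qBinomialTerm, hk], qBinomialTerm_zero]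
  have harg : Tendsto (fun n ↦ z * q ^ n) atTop (𝓝 0) := by
    simpa using (tendsto_pow_atTop_nhds_zero_of_norm_lt_one hq).const_mul z
  rw [← hval]
  refine tendsto_tsum_of_dominated_convergence (summable_norm_qBinomialTerm hq a hz)
    (fun k ↦ (harg.pow k).const_mul _) (Eventually.of_forall fun n k ↦ ?_)
  rw [qBinomialTerm_mul, norm_mul, norm_pow, norm_pow]
  exact mul_le_of_le_one_left (norm_nonneg _)
    (pow_le_one₀ (by positivity) (pow_le_one₀ (norm_nonneg q) hq.le))

theorem tsum_qBinomialTerm (hq : ‖q‖ < 1) (a : ℂ) {z : ℂ} (hz : ‖z‖ < 1) :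
    ∑' k, qBinomialTerm q a z k = qinf q (a * z) / qinf q z := by
  have hleft := (tendsto_qpoch_qinf hq z).mul_const (∑' k, qBinomialTerm q a z k)
  have hright :=
    (tendsto_qpoch_qinf hq (a * z)).mul (tendsto_tsum_qBinomialTerm_mul_pow hq a hz)
  rw [eq_div_iff (qinf_ne_zero_of_norm_lt_one hq hz), mul_comm, ← mul_one (qinf q (a * z))]
  exact tendsto_nhds_unique (hleft.congr (qpoch_mul_tsum_qBinomialTerm hq a hz)) hright

theorem tsum_qBinomialTerm_mul_pow (hq : ‖q‖ < 1) {a z : ℂ} (hz : ‖z‖ < 1)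
    (haz : qinf q (a * z) ≠ 0) (n : ℕ) :
    ∑' k, qBinomialTerm q a (z * q ^ n) k =
      qinf q (a * z) / qinf q z * (qpoch q z n / qpoch q (a * z) n) := by
  rw [tsum_qBinomialTerm hq a (norm_mul_pow_lt_one hq hz n), ← mul_assoc,
    qinf_mul_pow_div_qinf_mul_pow hq (qinf_ne_zero_of_norm_lt_one hq hz) haz]

end QBinomial

section Andrews

variable {q a c : ℂ} {n : ℕ} {b x : Fin n → ℂ}

theorem andrewsTerm_eq_mul_prod (q a c : ℂ) (b x : Fin n → ℂ) (k : Fin n → ℕ) :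
    andrewsTerm q a c b x k =
      qpoch q a (∑ j, k j : ℕ) / qpoch q c (∑ j, k j : ℕ) *
        ∏ j, qBinomialTerm q (b j) (x j) (k j) :=
  rfl

theorem summable_norm_andrewsTerm (hq : ‖q‖ < 1) (a : ℂ) (hc : qinf q c ≠ 0) (b : Fin n → ℂ)
    (hx : ∀ j, ‖x j‖ < 1) : Summable fun k ↦ ‖andrewsTerm q a c b x k‖ := by
  obtain ⟨C, hC⟩ := exists_norm_qpoch_div_qpoch_le hq a hc
  have hprod := summable_norm_prod_apply fun j ↦ summable_norm_qBinomialTerm hq (b j) (hx j)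
  simpa only [andrewsTerm_eq_mul_prod] using
    summable_norm_mul_of_norm_le (fun k : Fin n → ℕ ↦ hC (∑ j, k j)) hprod

/-- The summand of the double series obtained from Andrews's series by expanding
`(a;q)_N / (c;q)_N`, with `N = ∑ j, k j`, in a `q`-binomial series over `ℓ`. -/
noncomputable def andrewsDoubleTerm (q a c : ℂ) {n : ℕ} (b x : Fin n → ℂ) (k : Fin n → ℕ)
    (ℓ : ℕ) : ℂ :=
  qBinomialTerm q (c / a) (a * q ^ ∑ j, k j) ℓ * ∏ j, qBinomialTerm q (b j) (x j) (k j)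

theorem andrewsDoubleTerm_eq_pow_mul (q a c : ℂ) (b x : Fin n → ℂ) (k : Fin n → ℕ) (ℓ : ℕ) :
    andrewsDoubleTerm q a c b x k ℓ =
      (q ^ ∑ j, k j) ^ ℓ *
        ((∏ j, qBinomialTerm q (b j) (x j) (k j)) * qBinomialTerm q (c / a) a ℓ) := by
  rw [andrewsDoubleTerm, qBinomialTerm_mul]
  ring

theorem andrewsDoubleTerm_eq_mul_prod (q a c : ℂ) (b x : Fin n → ℂ) (k : Fin n → ℕ) (ℓ : ℕ) :
    andrewsDoubleTerm q a c b x k ℓ =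
      qBinomialTerm q (c / a) a ℓ * ∏ j, qBinomialTerm q (b j) (x j * q ^ ℓ) (k j) := by
  rw [andrewsDoubleTerm_eq_pow_mul]
  simp only [qBinomialTerm_mul, prod_mul_distrib, prod_pow_eq_pow_sum]
  rw [pow_right_comm]
  ring

theorem summable_andrewsDoubleTerm (hq : ‖q‖ < 1) (ha : ‖a‖ < 1) (c : ℂ) (b : Fin n → ℂ)
    (hx : ∀ j, ‖x j‖ < 1) :
    Summable (Function.uncurry (andrewsDoubleTerm q a c b x)) := by
  have hpow : ∀ p : (Fin n → ℕ) × ℕ, ‖(q ^ ∑ j, p.1 j) ^ p.2‖ ≤ 1 := fun p ↦ by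
    rw [norm_pow, norm_pow]
    exact pow_le_one₀ (by positivity) (pow_le_one₀ (norm_nonneg q) hq.le)
  have hprod := summable_norm_prod_apply fun j ↦ summable_norm_qBinomialTerm hq (b j) (hx j)
  simpa only [Function.uncurry_def, andrewsDoubleTerm_eq_pow_mul] using
    (summable_norm_mul_of_norm_le hpow
      (hprod.mul_norm (summable_norm_qBinomialTerm hq (c / a) ha))).of_norm

theorem mul_tsum_andrewsDoubleTerm (hq : ‖q‖ < 1) (ha₀ : a ≠ 0) (ha : ‖a‖ < 1)
    (hc : qinf q c ≠ 0) (b x : Fin n → ℂ) (k : Fin n → ℕ) :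
    qinf q a / qinf q c * ∑' ℓ, andrewsDoubleTerm q a c b x k ℓ = andrewsTerm q a c b x k := by
  have hca : c / a * a = c := div_mul_cancel₀ c ha₀
  have ha' : qinf q a ≠ 0 := qinf_ne_zero_of_norm_lt_one hq ha
  have hsum := tsum_qBinomialTerm_mul_pow hq ha (hca.symm ▸ hc) (∑ j, k j)
  rw [hca] at hsum
  simp only [andrewsDoubleTerm]
  rw [tsum_mul_right, hsum, ← mul_assoc, ← mul_assoc, div_mul_div_cancel₀ hc, div_self ha', one_mul,
    andrewsTerm_eq_mul_prod]

theorem tsum_andrewsDoubleTerm (hq : ‖q‖ < 1) (a c : ℂ) (hx : ∀ j, ‖x j‖ < 1)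
    (hbx : ∀ j, qinf q (b j * x j) ≠ 0) (ℓ : ℕ) :
    ∑' k, andrewsDoubleTerm q a c b x k ℓ =
      (∏ j, qinf q (b j * x j)) / (∏ j, qinf q (x j)) *
        ((qpoch q (c / a) ℓ * ∏ j, qpoch q (x j) ℓ) /
          (qpoch q q ℓ * ∏ j, qpoch q (b j * x j) ℓ) * a ^ ℓ) := by
  have hprod : ∑' k : Fin n → ℕ, ∏ j, qBinomialTerm q (b j) (x j * q ^ ℓ) (k j) =
      ∏ j, qinf q (b j * x j) / qinf q (x j) * (qpoch q (x j) ℓ / qpoch q (b j * x j) ℓ) := by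
    rw [tsum_prod_apply fun j ↦
      summable_norm_qBinomialTerm hq (b j) (norm_mul_pow_lt_one hq (hx j) ℓ)]
    exact prod_congr rfl fun j _ ↦ tsum_qBinomialTerm_mul_pow hq (hx j) (hbx j) ℓ
  simp only [andrewsDoubleTerm_eq_mul_prod]
  rw [tsum_mul_left, hprod, prod_mul_distrib, prod_div_distrib, prod_div_distrib, qBinomialTerm,
    mul_div_mul_comm]
  ring

end Andrews

theorem andrews_identity (q a c : ℂ) (n : ℕ) (hn : 1 ≤ n) (b x : Fin n → ℂ)
    (hq0 : 0 < ‖q‖) (hq1 : ‖q‖ < 1)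
    (ha : a ≠ 0) (ha1 : ‖a‖ < 1) (hx : ∀ j, ‖x j‖ < 1)
    (hcq : ∀ m : ℕ, c ≠ q ^ (-(m : ℤ)))
    (hbxq : ∀ j, ∀ m : ℕ, b j * x j ≠ q ^ (-(m : ℤ))) :
    Summable (fun k : Fin n → ℕ => ‖andrewsTerm q a c b x k‖) ∧
    (∑' k : Fin n → ℕ, andrewsTerm q a c b x k) =
      qinf q a * (∏ j, qinf q (b j * x j)) / (qinf q c * ∏ j, qinf q (x j)) *
        ∑' ℓ : ℕ,
          (qpoch q (c / a) (ℓ : ℤ) * ∏ j, qpoch q (x j) (ℓ : ℤ)) /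
            (qpoch q q (ℓ : ℤ) * ∏ j, qpoch q (b j * x j) (ℓ : ℤ)) * a ^ ℓ := by
  have hc : qinf q c ≠ 0 := qinf_ne_zero_of_ne_zpow hq1 hcq
  have hbx : ∀ j, qinf q (b j * x j) ≠ 0 := fun j ↦ qinf_ne_zero_of_ne_zpow hq1 (hbxq j)
  refine ⟨summable_norm_andrewsTerm hq1 a hc b hx, ?_⟩
  calc
    _ = ∑' k, qinf q a / qinf q c * ∑' ℓ, andrewsDoubleTerm q a c b x k ℓ :=
      tsum_congr fun k ↦ (mul_tsum_andrewsDoubleTerm hq1 ha ha1 hc b x k).symm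
    _ = qinf q a / qinf q c * ∑' ℓ, ∑' k, andrewsDoubleTerm q a c b x k ℓ := by
      rw [tsum_mul_left, (summable_andrewsDoubleTerm hq1 ha1 c b hx).tsum_comm]
    _ = _ := by
      simp only [tsum_andrewsDoubleTerm hq1 a c hx hbx]
      rw [tsum_mul_left, ← mul_assoc, div_mul_div_comm]
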